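/- Let P ⊆ ℝ^d be a d-dimensional simplicial reflexive polytope, F a facet of P and v ∈ 𝒱(F). Then for every x ∈ P one has ⟨u_F, x⟩ − 1 ≤ ⟨u_F^v, x⟩, and if equality holds then x lies on the neighboring facet N(F,v). -/

import Mathlib

/-!
Let `c = 1 - ⟨u', v⟩`, where `u'` is the normal of the neighboring facet. The functionals `u'` and
`u - c • u_F^v` agree on the vertices of `F`, which span `ℝ^d`, so they are equal. Since `P` is
reflexive, `⟨u', v⟩` is an integer; it is at most `1`, and it is not `1` because the facets differ.
Hence `c ≥ 1`. For `x ∈ P`, the inequality `⟨u', x⟩ ≤ 1` reads `⟨u, x⟩ - 1 ≤ c * ⟨u_F^v, x⟩`, and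
since `⟨u, x⟩ - 1 ≤ 0`, the factor `c ≥ 1` may be dropped.
-/

noncomputable section

/-- The standard inner product on `ℝ^d`. -/
def dotp {d : ℕ} (x y : Fin d → ℝ) : ℝ := ∑ i, x i * y i

/-- `x` is a point of the lattice `ℤ^d`. -/
def IsLP {d : ℕ} (x : Fin d → ℝ) : Prop := ∀ i, ∃ n : ℤ, x i = (n : ℝ)

/-- A lattice polytope: convex hull of finitely many lattice points. -/
def IsLatticePolytope {d : ℕ} (P : Set (Fin d → ℝ)) : Prop :=
  ∃ V : Finset (Fin d → ℝ), (∀ v ∈ V, IsLP v) ∧ P = convexHull ℝ (V : Set (Fin d → ℝ))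

/-- The dual polytope `P* = {x | ⟨x,y⟩ ≤ 1 ∀ y ∈ P}`. -/
def dualPolytope {d : ℕ} (P : Set (Fin d → ℝ)) : Set (Fin d → ℝ) :=
  {x | ∀ y ∈ P, dotp x y ≤ 1}

/-- `P` is a reflexive polytope: a (`d`-dimensional) lattice polytope with `0` in its
interior whose dual is again a lattice polytope. -/
def IsReflexive {d : ℕ} (P : Set (Fin d → ℝ)) : Prop :=
  IsLatticePolytope P ∧ (0 : Fin d → ℝ) ∈ interior P ∧ IsLatticePolytope (dualPolytope P)

/-- `F` is a facet of `P` with (uniquely determined) outer normal `u`, normalized by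
`⟨u, F⟩ = 1` (possible since `0` is in the interior of `P`). -/
def IsFacetNormal {d : ℕ} (P F : Set (Fin d → ℝ)) (u : Fin d → ℝ) : Prop :=
  F.Nonempty ∧ (∀ y ∈ P, dotp u y ≤ 1) ∧ F = {y ∈ P | dotp u y = 1} ∧
    Module.finrank ℝ (vectorSpan ℝ F) = d - 1

/-- `F` is a facet of `P`. -/
def IsFacet {d : ℕ} (P F : Set (Fin d → ℝ)) : Prop := ∃ u, IsFacetNormal P F u

/-- `P` is simplicial: every facet has exactly `d` vertices. -/
def IsSimplicial {d : ℕ} (P : Set (Fin d → ℝ)) : Prop :=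
  ∀ F, IsFacet P F → (Set.extremePoints ℝ F).ncard = d

theorem vectorSpan_lt_span_of_eq_one {k V : Type*} [Ring k] [Nontrivial k] [AddCommGroup V]
    [Module k V] {s : Set V} (hs : s.Nonempty) (l : V →ₗ[k] k) (hl : ∀ y ∈ s, l y = 1) :
    vectorSpan k s < Submodule.span k s := by
  obtain ⟨y₀, hy₀⟩ := hs
  have le_span : vectorSpan k s ≤ Submodule.span k s := by
    rw [vectorSpan_def, Submodule.span_le]
    rintro _ ⟨a, ha, b, hb, rfl⟩
    exact Submodule.sub_mem _ (Submodule.subset_span ha) (Submodule.subset_span hb)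
  have le_ker : vectorSpan k s ≤ l.ker := by
    rw [vectorSpan_def, Submodule.span_le]
    rintro _ ⟨a, ha, b, hb, rfl⟩
    simp [hl a ha, hl b hb]
  have hy₀_notMem : y₀ ∉ vectorSpan k s := fun h => by
    simpa [hl y₀ hy₀] using le_ker h
  exact SetLike.lt_iff_le_and_exists.2
    ⟨le_span, y₀, Submodule.subset_span hy₀, hy₀_notMem⟩

theorem span_extremePoints {E : Type*} [AddCommGroup E] [Module ℝ E] [TopologicalSpace E]
    [T2Space E] [IsTopologicalAddGroup E] [ContinuousSMul ℝ E] [LocallyConvexSpace ℝ E]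
    [FiniteDimensional ℝ E] {s : Set E} (hsc : IsCompact s) (hsx : Convex ℝ s) :
    Submodule.span ℝ (s.extremePoints ℝ) = Submodule.span ℝ s := by
  refine le_antisymm (Submodule.span_mono extremePoints_subset) (Submodule.span_le.2 ?_)
  calc s = closure (convexHull ℝ (s.extremePoints ℝ)) :=
        (closure_convexHull_extremePoints hsc hsx).symm
    _ ⊆ Submodule.span ℝ (s.extremePoints ℝ) :=
        closure_minimal (convexHull_min Submodule.subset_span (Submodule.convex _))
          (Submodule.closed_of_finiteDimensional _)

section Pairing

variable {d : ℕ} {a b x y : Fin d → ℝ}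

theorem dotp_eq_dotProduct (x y : Fin d → ℝ) : dotp x y = x ⬝ᵥ y := rfl

theorem dotp_sub_smul_left (a b y : Fin d → ℝ) (c : ℝ) :
    dotp (a - c • b) y = dotp a y - c * dotp b y := by
  simp only [dotp_eq_dotProduct, sub_dotProduct, smul_dotProduct, smul_eq_mul]

theorem eq_of_span_eq_top_of_dotp_eq {s : Set (Fin d → ℝ)} (hs : Submodule.span ℝ s = ⊤)
    (h : ∀ y ∈ s, dotp a y = dotp b y) : a = b :=
  (dotProductEquiv ℝ (Fin d)).injective (LinearMap.ext_on hs h)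

theorem IsLP.exists_dotp_eq_intCast (hx : IsLP x) (hy : IsLP y) : ∃ n : ℤ, dotp x y = n := by
  choose f hf using hx
  choose g hg using hy
  exact ⟨∑ i, f i * g i, by simp [dotp, hf, hg]⟩

theorem eq_sub_smul_of_dotp_eq_one {s : Set (Fin d → ℝ)} (hs : Submodule.span ℝ s = ⊤)
    {u u' uv v : Fin d → ℝ} (hu : ∀ w ∈ s, dotp u w = 1)
    (hu' : ∀ w ∈ s, w ≠ v → dotp u' w = 1) (huv1 : dotp uv v = 1)
    (huv0 : ∀ w ∈ s, w ≠ v → dotp uv w = 0) :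
    u' = u - (1 - dotp u' v) • uv := by
  refine eq_of_span_eq_top_of_dotp_eq hs fun w hw => ?_
  rw [dotp_sub_smul_left, hu w hw]
  rcases eq_or_ne w v with rfl | hwv
  · rw [huv1]; ring
  · rw [hu' w hw hwv, huv0 w hw hwv]; ring

end Pairing

namespace IsLatticePolytope

variable {d : ℕ} {P : Set (Fin d → ℝ)}

protected theorem isCompact (hP : IsLatticePolytope P) : IsCompact P := by
  obtain ⟨V, -, rfl⟩ := hP
  exact V.finite_toSet.isCompact_convexHull ℝ

protected theorem convex (hP : IsLatticePolytope P) : Convex ℝ P := by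
  obtain ⟨V, -, rfl⟩ := hP
  exact convex_convexHull ℝ _

theorem isLP_of_mem_extremePoints (hP : IsLatticePolytope P) {v : Fin d → ℝ}
    (hv : v ∈ P.extremePoints ℝ) : IsLP v := by
  obtain ⟨V, hV, rfl⟩ := hP
  exact hV v (extremePoints_convexHull_subset hv)

end IsLatticePolytope

namespace IsFacetNormal

variable {d : ℕ} {P F : Set (Fin d → ℝ)} {u : Fin d → ℝ}

theorem mem_iff (hF : IsFacetNormal P F u) {y : Fin d → ℝ} :
    y ∈ F ↔ y ∈ P ∧ dotp u y = 1 := by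
  rw [hF.2.2.1, Set.mem_ofPred_eq]

theorem dotp_eq_one (hF : IsFacetNormal P F u) {y : Fin d → ℝ} (hy : y ∈ F) : dotp u y = 1 :=
  (hF.mem_iff.1 hy).2

protected theorem isExposed (hF : IsFacetNormal P F u) : IsExposed ℝ P F := by
  rintro ⟨y₀, hy₀⟩
  refine ⟨(dotProductEquiv ℝ (Fin d) u).toContinuousLinearMap, ?_⟩
  ext x
  rw [hF.mem_iff]
  refine and_congr_right fun hx => ⟨fun hx1 y hy => ?_, fun hmax => ?_⟩
  · exact (hF.2.1 y hy).trans_eq hx1.symm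
  · exact (hF.2.1 x hx).antisymm ((hF.dotp_eq_one hy₀).ge.trans (hmax y₀ (hF.mem_iff.1 hy₀).1))

theorem span_eq_top (hF : IsFacetNormal P F u) : Submodule.span ℝ F = ⊤ := by
  have hlt : Module.finrank ℝ (vectorSpan ℝ F) < Module.finrank ℝ (Submodule.span ℝ F) :=
    Submodule.finrank_lt_finrank_of_lt <|
      vectorSpan_lt_span_of_eq_one hF.1 (dotProductEquiv ℝ (Fin d) u) fun _ => hF.dotp_eq_one
  have hle := (Submodule.span ℝ F).finrank_le
  have hrank : Module.finrank ℝ (vectorSpan ℝ F) = d - 1 := hF.2.2.2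
  apply Submodule.eq_top_of_finrank_eq
  rw [Module.finrank_fin_fun] at hle ⊢
  lia

theorem span_extremePoints_eq_top (hF : IsFacetNormal P F u) (hPc : IsCompact P)
    (hPx : Convex ℝ P) : Submodule.span ℝ (F.extremePoints ℝ) = ⊤ := by
  rw [span_extremePoints (hF.isExposed.isCompact hPc) (hF.isExposed.convex hPx), hF.span_eq_top]

theorem mem_extremePoints_dualPolytope (hF : IsFacetNormal P F u) :
    u ∈ (dualPolytope P).extremePoints ℝ := by
  refine ⟨hF.2.1, ?_⟩
  rintro p hp q hq ⟨a, b, ha, hb, hab, rfl⟩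
  refine eq_of_span_eq_top_of_dotp_eq hF.span_eq_top fun y hy => ?_
  have hpy : dotp p y ≤ 1 := hp y (hF.mem_iff.1 hy).1
  have hqy : dotp q y ≤ 1 := hq y (hF.mem_iff.1 hy).1
  have hcomb : a * dotp p y + b * dotp q y = 1 := by
    simpa only [dotp_eq_dotProduct, add_dotProduct, smul_dotProduct, smul_eq_mul]
      using hF.dotp_eq_one hy
  rw [hF.dotp_eq_one hy]
  refine hpy.antisymm (not_lt.1 fun hlt => ?_)
  linarith [mul_lt_of_lt_one_right ha hlt, mul_le_of_le_one_right hb.le hqy]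

theorem isLP (hF : IsFacetNormal P F u) (hP : IsLatticePolytope (dualPolytope P)) : IsLP u :=
  hP.isLP_of_mem_extremePoints hF.mem_extremePoints_dualPolytope

theorem isLP_of_mem_extremePoints (hF : IsFacetNormal P F u) (hP : IsLatticePolytope P)
    {v : Fin d → ℝ} (hv : v ∈ F.extremePoints ℝ) : IsLP v :=
  hP.isLP_of_mem_extremePoints (hF.isExposed.isExtreme.extremePoints_subset_extremePoints hv)

end IsFacetNormal

theorem sub_one_le_and_eq_one_of_sub_mul_le_one {a b c : ℝ} (ha : a ≤ 1) (hc : 1 ≤ c)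
    (h : a - c * b ≤ 1) : a - 1 ≤ b ∧ (a - 1 = b → a - c * b = 1) := by
  constructor
  · have hmul : c * (a - 1) ≤ c * b := calc
      c * (a - 1) ≤ 1 * (a - 1) := mul_le_mul_of_nonpos_right hc (by linarith)
      _ ≤ c * b := by linarith
    exact le_of_mul_le_mul_left hmul (by linarith)
  · rintro rfl
    refine h.antisymm ?_
    nlinarith

theorem stmt8_general {d : ℕ} {P F F' : Set (Fin d → ℝ)} {u u' v uv : Fin d → ℝ}
    (hPc : IsCompact P) (hPx : Convex ℝ P) (hF : IsFacetNormal P F u)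
    (hu' : ∀ y ∈ P, dotp u' y ≤ 1) (hF' : F' = {y ∈ P | dotp u' y = 1})
    (hv : v ∈ F.extremePoints ℝ) (hint : ∃ n : ℤ, dotp u' v = n)
    (hne : F' ≠ F) (hsub : F.extremePoints ℝ \ {v} ⊆ F') (huv1 : dotp uv v = 1)
    (huv0 : ∀ w ∈ F.extremePoints ℝ, w ≠ v → dotp uv w = 0) :
    ∀ x ∈ P, dotp u x - 1 ≤ dotp uv x ∧ (dotp u x - 1 = dotp uv x → x ∈ F') := by
  subst hF'
  have normal_eq : u' = u - (1 - dotp u' v) • uv :=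
    eq_sub_smul_of_dotp_eq_one (hF.span_extremePoints_eq_top hPc hPx)
      (fun w hw => hF.dotp_eq_one hw.1) (fun w hw hwv => (hsub ⟨hw, hwv⟩).2) huv1 huv0
  have coeff_ne_one : dotp u' v ≠ 1 := fun h => hne <| by
    have : u' = u := by simpa [h] using normal_eq
    rw [this, hF.2.2.1]
  have one_le_coeff : 1 ≤ 1 - dotp u' v := by
    have hle : dotp u' v ≤ 1 := hu' v (hF.mem_iff.1 hv.1).1
    obtain ⟨n, hn⟩ := hint
    rw [hn] at hle coeff_ne_one ⊢
    norm_cast at hle coeff_ne_one ⊢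
    lia
  intro x hx
  have dotp_normal : dotp u' x = dotp u x - (1 - dotp u' v) * dotp uv x := by
    conv_lhs => rw [normal_eq, dotp_sub_smul_left]
  obtain ⟨hle, heq⟩ := sub_one_le_and_eq_one_of_sub_mul_le_one (hF.2.1 x hx) one_le_coeff
    (dotp_normal ▸ hu' x hx)
  exact ⟨hle, fun h => ⟨hx, dotp_normal.trans (heq h)⟩⟩

/-- for a facet `F` of a simplicial reflexive polytope and a vertex `v` of `F`:
`⟨u_F, x⟩ - 1 ≤ ⟨u_F^v, x⟩` for all `x ∈ P`, with equality only for `x` on the neighboring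
facet `N(F,v)`. -/
theorem stmt8 {d : ℕ} (P : Set (Fin d → ℝ)) (hP : IsReflexive P) (hs : IsSimplicial P)
    (F F' : Set (Fin d → ℝ)) (u u' : Fin d → ℝ)
    (hF : IsFacetNormal P F u) (hF' : IsFacetNormal P F' u')
    (v : Fin d → ℝ) (hv : v ∈ Set.extremePoints ℝ F)
    (hne : F' ≠ F) (hsub : Set.extremePoints ℝ F \ {v} ⊆ F')
    (uv : Fin d → ℝ) (huv1 : dotp uv v = 1)
    (huv0 : ∀ w ∈ Set.extremePoints ℝ F, w ≠ v → dotp uv w = 0) :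
    ∀ x ∈ P, dotp u x - 1 ≤ dotp uv x ∧ (dotp u x - 1 = dotp uv x → x ∈ F') :=
  stmt8_general hP.1.isCompact hP.1.convex hF hF'.2.1 hF'.2.2.1 hv
    ((hF'.isLP hP.2.2).exists_dotp_eq_intCast (hF.isLP_of_mem_extremePoints hP.1 hv))
    hne hsub huv1 huv0
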